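/- Let n ≥ 1, let γ ∈ ℝ, and let φ : ℝⁿ → ℝ be of class C⁴. Define the operators, acting on smooth functions f : ℝⁿ → ℂ, by S f = −iγ(2∇φ·∇f + (Δφ)f) and A f = i(Δf + γ²|∇φ|²f). Then for every f : ℝⁿ → ℂ of class C³ and every x ∈ ℝⁿ, (S(Af) − A(Sf))(x) = −γ [ 4 ∑_{j,k=1}^n ∂_j( ∂_j∂_kφ(x) ∂_k f(x) ) − 4γ² ( ∑_{j,k=1}^n ∂_j∂_kφ(x) ∂_jφ(x) ∂_kφ(x) ) f(x) + (Δ²φ)(x) f(x) ], i.e. [S,A] = −γ[ 4∇·(D²φ ∇·) − 4γ² D²φ∇φ·∇φ + Δ²φ ]. -/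

import Mathlib

/-!
Write `L = 2∇φ·∇ + Δφ` and `W = |∇φ|²`. Then `S = -iγL` and `A = i(Δ + γ²W)`, so that
`[S,A] = γ([L,Δ] + γ²[L,W])`.

* By the Leibniz rule `[L,W]` is multiplication by `2∇φ·∇W = 4D²φ∇φ·∇φ`.
* The product rule for `Δ`, together with the fact that `Δ` commutes with every `∂ⱼ`, gives
  `[Δ,L] = 4∇(Δφ)·∇ + 4D²φ:D² + Δ²φ`, and `∇(Δφ)·∇f + D²φ:D²f = ∇·(D²φ∇f)`.

Both computations rest only on the Leibniz rule and on the commutation of derivatives along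
constant vectors, so they make sense with `Δ = ∑ᵢ ∂ᵢ²` and `∇ = (∂ᵢ)ᵢ` for any finite family of
directions in a normed space, and for vector-valued `f`.
-/

open MeasureTheory Complex Filter Set
open scoped ENNReal

/-- Partial derivative in the `j`-th coordinate direction of a complex-valued function. -/
noncomputable def pderivC {n : ℕ} (j : Fin n) (f : EuclideanSpace ℝ (Fin n) → ℂ)
    (x : EuclideanSpace ℝ (Fin n)) : ℂ :=
  fderiv ℝ f x (EuclideanSpace.single j 1)

/-- Partial derivative in the `j`-th coordinate direction of a real-valued function. -/
noncomputable def pderivR {n : ℕ} (j : Fin n) (f : EuclideanSpace ℝ (Fin n) → ℝ)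
    (x : EuclideanSpace ℝ (Fin n)) : ℝ :=
  fderiv ℝ f x (EuclideanSpace.single j 1)

/-- The Laplacian of a complex-valued function as a sum of repeated partial derivatives. -/
noncomputable def lapC {n : ℕ} (f : EuclideanSpace ℝ (Fin n) → ℂ)
    (x : EuclideanSpace ℝ (Fin n)) : ℂ :=
  ∑ j : Fin n, pderivC j (fun y => pderivC j f y) x

/-- The Laplacian of a real-valued function as a sum of repeated partial derivatives. -/
noncomputable def lapR {n : ℕ} (f : EuclideanSpace ℝ (Fin n) → ℝ)
    (x : EuclideanSpace ℝ (Fin n)) : ℝ :=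
  ∑ j : Fin n, pderivR j (fun y => pderivR j f y) x

/-- The symmetric operator `S f = -iγ(2∇φ·∇f + (Δφ)f)`. -/
noncomputable def opS {n : ℕ} (γ : ℝ) (φ : EuclideanSpace ℝ (Fin n) → ℝ)
    (f : EuclideanSpace ℝ (Fin n) → ℂ) (x : EuclideanSpace ℝ (Fin n)) : ℂ :=
  -Complex.I * (γ : ℂ) *
    (2 * ∑ j : Fin n, ((pderivR j φ x : ℝ) : ℂ) * pderivC j f x + ((lapR φ x : ℝ) : ℂ) * f x)

/-- The skew-symmetric operator `A f = i(Δf + γ²|∇φ|²f)`. -/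
noncomputable def opA {n : ℕ} (γ : ℝ) (φ : EuclideanSpace ℝ (Fin n) → ℝ)
    (f : EuclideanSpace ℝ (Fin n) → ℂ) (x : EuclideanSpace ℝ (Fin n)) : ℂ :=
  Complex.I * (lapC f x + (γ : ℂ) ^ 2 * (((∑ j : Fin n, (pderivR j φ x) ^ 2 : ℝ)) : ℂ) * f x)

lemma smul_const_smul_comm {X R S M : Type*} [SMul R M] [SMul S M] [SMulCommClass S R M]
    (φ : X → S) (c : R) (f : X → M) : φ • c • f = c • φ • f :=
  funext fun x => smul_comm (φ x) c (f x)

section Along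

variable {E F ι R : Type*} [NormedAddCommGroup E] [NormedSpace ℝ E]
  [NormedAddCommGroup F] [NormedSpace ℝ F] [Fintype ι]
  [DivisionSemiring R] [Module R F] [SMulCommClass ℝ R F] [ContinuousConstSMul R F]

/-- The derivative of `f` in the direction `v`, as a function. -/
noncomputable def derivAlong (v : E) (f : E → F) : E → F :=
  fun x => fderiv ℝ f x v

/-- The Laplacian `Δf = ∑ᵢ ∂ᵢ∂ᵢf` of a family `v` of directions, where `∂ᵢ` is the derivative in
the direction `v i`; for the standard basis of `ℝⁿ` this is the usual Laplacian. -/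
noncomputable def laplacianAlong (v : ι → E) (f : E → F) : E → F :=
  ∑ i, derivAlong (v i) (derivAlong (v i) f)

/-- The pairing `∇φ·∇f = ∑ᵢ ∂ᵢφ ∂ᵢf` of gradients with respect to the directions `v`. -/
noncomputable def gradPairing (v : ι → E) (φ : E → ℝ) (f : E → F) : E → F :=
  ∑ i, derivAlong (v i) φ • derivAlong (v i) f

/-- The pairing `D²φ : D²f = ∑ᵢⱼ ∂ᵢ∂ⱼφ ∂ᵢ∂ⱼf` of Hessians with respect to the directions `v`. -/
noncomputable def hessianPairing (v : ι → E) (φ : E → ℝ) (f : E → F) : E → F :=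
  ∑ i, ∑ j, derivAlong (v i) (derivAlong (v j) φ) • derivAlong (v i) (derivAlong (v j) f)

/-- The second-order term `∇·(D²φ∇f) = ∑ᵢ ∂ᵢ(∑ⱼ ∂ᵢ∂ⱼφ ∂ⱼf)`. -/
noncomputable def divHessianGrad (v : ι → E) (φ : E → ℝ) (f : E → F) : E → F :=
  ∑ i, derivAlong (v i) (∑ j, derivAlong (v i) (derivAlong (v j) φ) • derivAlong (v j) f)

/-- The quadratic form `D²φ∇φ·∇φ = ∑ᵢⱼ ∂ᵢ∂ⱼφ ∂ᵢφ ∂ⱼφ`. -/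
noncomputable def hessianGradGrad (v : ι → E) (φ : E → ℝ) : E → ℝ :=
  ∑ i, ∑ j, derivAlong (v i) (derivAlong (v j) φ) * derivAlong (v i) φ * derivAlong (v j) φ

/-- The first-order operator `2∇φ·∇ + Δφ`, which is `S` without its factor `-iγ`. -/
noncomputable def transport (v : ι → E) (φ : E → ℝ) (f : E → F) : E → F :=
  2 • gradPairing v φ f + laplacianAlong v φ • f

variable {φ ψ : E → ℝ} {f g : E → F} {m k : WithTop ℕ∞}

lemma contDiff_derivAlong (hf : ContDiff ℝ k f) (hmk : m + 1 ≤ k) (v : E) :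
    ContDiff ℝ m (derivAlong v f) :=
  (hf.fderiv_right hmk).clm_apply contDiff_const

lemma differentiable_derivAlong (hf : ContDiff ℝ 2 f) (v : E) :
    Differentiable ℝ (derivAlong v f) :=
  (contDiff_derivAlong (m := 1) hf (by norm_num) v).differentiable one_ne_zero

lemma derivAlong_add (hf : Differentiable ℝ f) (hg : Differentiable ℝ g) (v : E) :
    derivAlong v (f + g) = derivAlong v f + derivAlong v g := by
  ext x
  simp [derivAlong, fderiv_add (hf x) (hg x)]

lemma derivAlong_const_smul (c : R) (f : E → F) (v : E) :
    derivAlong v (c • f) = c • derivAlong v f := by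
  ext x
  simp [derivAlong, fderiv_const_smul_field]

lemma derivAlong_smul (hφ : Differentiable ℝ φ) (hf : Differentiable ℝ f) (v : E) :
    derivAlong v (φ • f) = derivAlong v φ • f + φ • derivAlong v f := by
  ext x
  simp [derivAlong, fderiv_smul (hφ x) (hf x), add_comm]

lemma derivAlong_sum {κ : Type*} (s : Finset κ) {f : κ → E → F}
    (hf : ∀ i ∈ s, Differentiable ℝ (f i)) (v : E) :
    derivAlong v (∑ i ∈ s, f i) = ∑ i ∈ s, derivAlong v (f i) := by
  ext x
  simp [derivAlong, fderiv_sum fun i hi => hf i hi x]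

lemma derivAlong_derivAlong_apply (hf : ContDiff ℝ 2 f) (v w x : E) :
    derivAlong v (derivAlong w f) x = fderiv ℝ (fderiv ℝ f) x v w := by
  have hf' : Differentiable ℝ (fderiv ℝ f) :=
    (hf.fderiv_right (m := 1) (by norm_num)).differentiable one_ne_zero
  unfold derivAlong
  simp [fderiv_clm_apply (hf' x) (differentiableAt_const w)]

lemma derivAlong_comm (hf : ContDiff ℝ 2 f) (v w : E) :
    derivAlong v (derivAlong w f) = derivAlong w (derivAlong v f) := by
  ext x
  rw [derivAlong_derivAlong_apply hf, derivAlong_derivAlong_apply hf]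
  exact (hf.contDiffAt.isSymmSndFDerivAt (by simp)).eq v w

lemma contDiff_laplacianAlong (hf : ContDiff ℝ k f) (hmk : m + 2 ≤ k) (v : ι → E) :
    ContDiff ℝ m (laplacianAlong v f) := by
  have hmk' : m + 1 + 1 ≤ k := by rwa [add_assoc, one_add_one_eq_two]
  unfold laplacianAlong
  rw [Finset.sum_fn]
  exact ContDiff.sum fun i _ => contDiff_derivAlong (contDiff_derivAlong hf hmk' _) le_rfl _

lemma contDiff_gradPairing (hφ : ContDiff ℝ k φ) (hf : ContDiff ℝ k f) (hmk : m + 1 ≤ k)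
    (v : ι → E) : ContDiff ℝ m (gradPairing v φ f) := by
  unfold gradPairing
  rw [Finset.sum_fn]
  exact ContDiff.sum fun i _ =>
    (contDiff_derivAlong hφ hmk _).smul (contDiff_derivAlong hf hmk _)

lemma laplacianAlong_add (hf : ContDiff ℝ 2 f) (hg : ContDiff ℝ 2 g) (v : ι → E) :
    laplacianAlong v (f + g) = laplacianAlong v f + laplacianAlong v g := by
  simp_rw [laplacianAlong, ← Finset.sum_add_distrib,
    derivAlong_add (hf.differentiable two_ne_zero) (hg.differentiable two_ne_zero),
    derivAlong_add (differentiable_derivAlong hf _) (differentiable_derivAlong hg _)]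

lemma laplacianAlong_const_smul (c : R) (f : E → F) (v : ι → E) :
    laplacianAlong v (c • f) = c • laplacianAlong v f := by
  simp_rw [laplacianAlong, derivAlong_const_smul, Finset.smul_sum]

lemma laplacianAlong_smul (hφ : ContDiff ℝ 2 φ) (hf : ContDiff ℝ 2 f) (v : ι → E) :
    laplacianAlong v (φ • f) =
      laplacianAlong v φ • f + 2 • gradPairing v φ f + φ • laplacianAlong v f := by
  have hφ₁ := hφ.differentiable two_ne_zero
  have hf₁ := hf.differentiable two_ne_zero
  have hφ' (i : ι) := differentiable_derivAlong hφ (v i)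
  have hf' (i : ι) := differentiable_derivAlong hf (v i)
  simp_rw [laplacianAlong, gradPairing, Finset.sum_smul, Finset.smul_sum,
    ← Finset.sum_add_distrib]
  refine Finset.sum_congr rfl fun i _ => ?_
  rw [derivAlong_smul hφ₁ hf₁, derivAlong_add ((hφ' i).smul hf₁) (hφ₁.smul (hf' i)),
    derivAlong_smul (hφ' i) hf₁, derivAlong_smul hφ₁ (hf' i)]
  module

lemma laplacianAlong_sum {κ : Type*} (s : Finset κ) {f : κ → E → F}
    (hf : ∀ j ∈ s, ContDiff ℝ 2 (f j)) (v : ι → E) :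
    laplacianAlong v (∑ j ∈ s, f j) = ∑ j ∈ s, laplacianAlong v (f j) := by
  simp_rw [laplacianAlong]
  rw [Finset.sum_comm]
  refine Finset.sum_congr rfl fun i _ => ?_
  rw [derivAlong_sum s fun j hj => (hf j hj).differentiable two_ne_zero,
    derivAlong_sum s fun j hj => differentiable_derivAlong (hf j hj) _]

lemma derivAlong_laplacianAlong (hf : ContDiff ℝ 3 f) (w : E) (v : ι → E) :
    derivAlong w (laplacianAlong v f) = laplacianAlong v (derivAlong w f) := by
  have hf' (i : ι) : ContDiff ℝ 2 (derivAlong (v i) f) :=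
    contDiff_derivAlong hf (by norm_num) _
  have hf'' (i : ι) : Differentiable ℝ (derivAlong (v i) (derivAlong (v i) f)) :=
    differentiable_derivAlong (hf' i) _
  rw [laplacianAlong, derivAlong_sum _ fun i _ => hf'' i]
  refine Finset.sum_congr rfl fun i _ => ?_
  rw [derivAlong_comm (hf' i), derivAlong_comm (hf.of_le (by norm_num)) w]

lemma gradPairing_add (φ : E → ℝ) (hf : Differentiable ℝ f) (hg : Differentiable ℝ g)
    (v : ι → E) : gradPairing v φ (f + g) = gradPairing v φ f + gradPairing v φ g := by
  simp_rw [gradPairing, derivAlong_add hf hg, smul_add, Finset.sum_add_distrib]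

lemma gradPairing_const_smul (φ : E → ℝ) (c : R) (f : E → F) (v : ι → E) :
    gradPairing v φ (c • f) = c • gradPairing v φ f := by
  simp_rw [gradPairing, derivAlong_const_smul, Finset.smul_sum]
  exact Finset.sum_congr rfl fun i _ => smul_const_smul_comm _ c _

lemma gradPairing_smul (φ : E → ℝ) (hψ : Differentiable ℝ ψ) (hf : Differentiable ℝ f)
    (v : ι → E) :
    gradPairing v φ (ψ • f) = gradPairing v φ ψ • f + ψ • gradPairing v φ f := by
  simp_rw [gradPairing, derivAlong_smul hψ hf, Finset.sum_smul, Finset.smul_sum,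
    ← Finset.sum_add_distrib]
  refine Finset.sum_congr rfl fun i _ => ?_
  rw [smul_eq_mul]
  module

lemma gradPairing_gradPairing_self (hφ : ContDiff ℝ 2 φ) (v : ι → E) :
    gradPairing v φ (gradPairing v φ φ) = 2 • hessianGradGrad v φ := by
  have hφ' (j : ι) := differentiable_derivAlong hφ (v j)
  simp_rw [gradPairing, hessianGradGrad, derivAlong_sum _ fun j _ => (hφ' j).smul (hφ' j),
    derivAlong_smul (hφ' _) (hφ' _), Finset.smul_sum]
  refine Finset.sum_congr rfl fun i _ => Finset.sum_congr rfl fun j _ => ?_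
  simp only [smul_eq_mul]
  ring

lemma laplacianAlong_gradPairing (hφ : ContDiff ℝ 3 φ) (hf : ContDiff ℝ 3 f) (v : ι → E) :
    laplacianAlong v (gradPairing v φ f) =
      gradPairing v (laplacianAlong v φ) f + 2 • hessianPairing v φ f
        + gradPairing v φ (laplacianAlong v f) := by
  have hφ' (j : ι) : ContDiff ℝ 2 (derivAlong (v j) φ) :=
    contDiff_derivAlong hφ (by norm_num) _
  have hf' (j : ι) : ContDiff ℝ 2 (derivAlong (v j) f) :=
    contDiff_derivAlong hf (by norm_num) _
  have hess : hessianPairing v φ f =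
      ∑ j, gradPairing v (derivAlong (v j) φ) (derivAlong (v j) f) := Finset.sum_comm
  rw [hess]
  simp_rw [gradPairing.eq_def v φ, gradPairing.eq_def v (laplacianAlong v φ),
    laplacianAlong_sum _ fun j _ => (hφ' j).smul (hf' j), laplacianAlong_smul (hφ' _) (hf' _),
    derivAlong_laplacianAlong hφ, derivAlong_laplacianAlong hf, Finset.sum_add_distrib,
    Finset.smul_sum]

lemma divHessianGrad_eq (hφ : ContDiff ℝ 3 φ) (hf : ContDiff ℝ 2 f) (v : ι → E) :
    divHessianGrad v φ f = gradPairing v (laplacianAlong v φ) f + hessianPairing v φ f := by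
  have hφ'' (i j : ι) : Differentiable ℝ (derivAlong (v i) (derivAlong (v j) φ)) :=
    differentiable_derivAlong (contDiff_derivAlong hφ (by norm_num) _) _
  have hf' (j : ι) := differentiable_derivAlong hf (v j)
  have third_order : gradPairing v (laplacianAlong v φ) f =
      ∑ i, ∑ j, derivAlong (v i) (derivAlong (v i) (derivAlong (v j) φ)) •
        derivAlong (v j) f := by
    simp_rw [gradPairing, derivAlong_laplacianAlong hφ, laplacianAlong, Finset.sum_smul]
    exact Finset.sum_comm
  rw [third_order]
  simp_rw [divHessianGrad, hessianPairing,
    derivAlong_sum _ fun j _ => (hφ'' _ j).smul (hf' j), derivAlong_smul (hφ'' _ _) (hf' _),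
    Finset.sum_add_distrib]

lemma transport_add (φ : E → ℝ) (hf : Differentiable ℝ f) (hg : Differentiable ℝ g)
    (v : ι → E) : transport v φ (f + g) = transport v φ f + transport v φ g := by
  simp only [transport, gradPairing_add φ hf hg, smul_add]
  abel

lemma transport_const_smul (φ : E → ℝ) (c : R) (f : E → F) (v : ι → E) :
    transport v φ (c • f) = c • transport v φ f := by
  rw [transport, gradPairing_const_smul, smul_comm 2 c, smul_const_smul_comm _ c f,
    ← smul_add, transport]

lemma transport_smul (φ : E → ℝ) (hψ : Differentiable ℝ ψ) (hf : Differentiable ℝ f)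
    (v : ι → E) :
    transport v φ (ψ • f) = ψ • transport v φ f + 2 • gradPairing v φ ψ • f := by
  rw [transport, transport, gradPairing_smul φ hψ hf]
  module

lemma laplacianAlong_transport (hφ : ContDiff ℝ 4 φ) (hf : ContDiff ℝ 3 f) (v : ι → E) :
    laplacianAlong v (transport v φ f) =
      transport v φ (laplacianAlong v f) + 4 • divHessianGrad v φ f
        + laplacianAlong v (laplacianAlong v φ) • f := by
  have hφ₃ : ContDiff ℝ 3 φ := hφ.of_le (by norm_num)
  have hf₂ : ContDiff ℝ 2 f := hf.of_le (by norm_num)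
  have hlap : ContDiff ℝ 2 (laplacianAlong v φ) := contDiff_laplacianAlong hφ (by norm_num) v
  have hgrad : ContDiff ℝ 2 (gradPairing v φ f) :=
    contDiff_gradPairing hφ₃ hf (by norm_num) v
  have hgrad₂ : ContDiff ℝ 2 (gradPairing v φ f + gradPairing v φ f) := hgrad.add hgrad
  rw [transport, two_nsmul, laplacianAlong_add hgrad₂ (hlap.smul hf₂),
    laplacianAlong_add hgrad hgrad, laplacianAlong_gradPairing hφ₃ hf,
    laplacianAlong_smul hlap hf₂, transport, divHessianGrad_eq hφ₃ hf₂]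
  module

end Along

section Commutator

variable {E F ι : Type*} [NormedAddCommGroup E] [NormedSpace ℝ E]
  [NormedAddCommGroup F] [NormedSpace ℂ F] [Fintype ι]

/-- The operator `S = -iγ(2∇φ·∇ + Δφ)` for the directions `v`. -/
noncomputable def opSAlong (v : ι → E) (γ : ℂ) (φ : E → ℝ) (f : E → F) : E → F :=
  (-I * γ) • transport v φ f

/-- The operator `A = i(Δ + γ²|∇φ|²)` for the directions `v`. -/
noncomputable def opAAlong (v : ι → E) (γ : ℂ) (φ : E → ℝ) (f : E → F) : E → F :=
  I • (laplacianAlong v f + γ ^ 2 • gradPairing v φ φ • f)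

theorem commutator_S_A_general (v : ι → E) (γ : ℂ) {φ : E → ℝ} (hφ : ContDiff ℝ 4 φ)
    {f : E → F} (hf : ContDiff ℝ 3 f) :
    opSAlong v γ φ (opAAlong v γ φ f) - opAAlong v γ φ (opSAlong v γ φ f) =
      -γ • (4 • divHessianGrad v φ f - (4 * γ ^ 2) • hessianGradGrad v φ • f
        + laplacianAlong v (laplacianAlong v φ) • f) := by
  have hφ₂ : ContDiff ℝ 2 φ := hφ.of_le (by norm_num)
  have hlap : Differentiable ℝ (laplacianAlong v f) :=
    (contDiff_laplacianAlong (m := 1) hf (by norm_num) v).differentiable one_ne_zero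
  have hgrad : Differentiable ℝ (gradPairing v φ φ) :=
    (contDiff_gradPairing (m := 1) hφ₂ hφ₂ (by norm_num) v).differentiable one_ne_zero
  have hf₁ : Differentiable ℝ f := hf.differentiable three_ne_zero
  have hI : -I * γ * I = γ := by linear_combination -γ * I_mul_I
  have hSA : opSAlong v γ φ (opAAlong v γ φ f) =
      γ • (transport v φ (laplacianAlong v f)
        + γ ^ 2 • (gradPairing v φ φ • transport v φ f + 2 • 2 • hessianGradGrad v φ • f)) := by
    rw [opSAlong, opAAlong, transport_const_smul, smul_smul, hI,
      transport_add φ hlap ((hgrad.smul hf₁).const_smul _), transport_const_smul,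
      transport_smul φ hgrad hf₁, gradPairing_gradPairing_self hφ₂, smul_assoc 2]
  have hAS : opAAlong v γ φ (opSAlong v γ φ f) =
      γ • (laplacianAlong v (transport v φ f)
        + γ ^ 2 • gradPairing v φ φ • transport v φ f) := by
    rw [opAAlong, opSAlong, laplacianAlong_const_smul, smul_const_smul_comm, smul_comm (γ ^ 2),
      ← smul_add, smul_smul, mul_comm I, hI]
  rw [hSA, hAS, laplacianAlong_transport hφ hf]
  ext x
  simp only [Pi.add_apply, Pi.sub_apply, Pi.smul_apply, Pi.smul_apply']
  module

end Commutator

section Coordinates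

variable {n : ℕ}

lemma pderivR_eq_derivAlong (j : Fin n) :
    pderivR j = derivAlong (F := ℝ) (EuclideanSpace.basisFun (Fin n) ℝ j) := by
  ext φ x
  rw [EuclideanSpace.basisFun_apply]
  rfl

lemma pderivC_eq_derivAlong (j : Fin n) :
    pderivC j = derivAlong (F := ℂ) (EuclideanSpace.basisFun (Fin n) ℝ j) := by
  ext f x
  rw [EuclideanSpace.basisFun_apply]
  rfl

lemma lapR_eq_laplacianAlong :
    lapR = laplacianAlong (F := ℝ) (EuclideanSpace.basisFun (Fin n) ℝ) := by
  ext φ x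
  simp [lapR, laplacianAlong, pderivR_eq_derivAlong]

lemma lapC_eq_laplacianAlong :
    lapC = laplacianAlong (F := ℂ) (EuclideanSpace.basisFun (Fin n) ℝ) := by
  ext f x
  simp [lapC, laplacianAlong, pderivC_eq_derivAlong]

lemma opS_eq_opSAlong (γ : ℝ) (φ : EuclideanSpace ℝ (Fin n) → ℝ) :
    opS γ φ = opSAlong (F := ℂ) (EuclideanSpace.basisFun (Fin n) ℝ) γ φ := by
  ext f x
  simp [opS, opSAlong, transport, gradPairing, lapR_eq_laplacianAlong, pderivR_eq_derivAlong,
    pderivC_eq_derivAlong]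

lemma opA_eq_opAAlong (γ : ℝ) (φ : EuclideanSpace ℝ (Fin n) → ℝ) :
    opA γ φ = opAAlong (F := ℂ) (EuclideanSpace.basisFun (Fin n) ℝ) γ φ := by
  ext f x
  simp [opA, opAAlong, gradPairing, lapC_eq_laplacianAlong, pderivR_eq_derivAlong, pow_two,
    mul_assoc]

end Coordinates

/-- The commutator identity
`[S,A] = -γ[4∇·(D²φ∇·) - 4γ²D²φ∇φ·∇φ + Δ²φ]` for the operators
`S = -iγ(2∇φ·∇ + Δφ)` and `A = i(Δ + γ²|∇φ|²)`. -/
theorem commutator_S_A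
    (n : ℕ) (hn : 1 ≤ n) (γ : ℝ) (φ : EuclideanSpace ℝ (Fin n) → ℝ)
    (hφ : ContDiff ℝ 4 φ)
    (f : EuclideanSpace ℝ (Fin n) → ℂ) (hf : ContDiff ℝ 3 f) :
    ∀ x : EuclideanSpace ℝ (Fin n),
      opS γ φ (opA γ φ f) x - opA γ φ (opS γ φ f) x =
        -(γ : ℂ) *
          (4 * ∑ j : Fin n, pderivC j
              (fun y => ∑ k : Fin n,
                ((pderivR j (fun z => pderivR k φ z) y : ℝ) : ℂ) * pderivC k f y) x
            - 4 * (γ : ℂ) ^ 2 *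
              (((∑ j : Fin n, ∑ k : Fin n,
                  pderivR j (fun z => pderivR k φ z) x * pderivR j φ x * pderivR k φ x : ℝ)) : ℂ)
                * f x
            + ((lapR (fun y => lapR φ y) x : ℝ) : ℂ) * f x) := by
  intro x
  have h := congrFun (commutator_S_A_general (EuclideanSpace.basisFun (Fin n) ℝ) γ hφ hf) x
  simpa [opS_eq_opSAlong, opA_eq_opAAlong, lapR_eq_laplacianAlong, pderivR_eq_derivAlong,
    pderivC_eq_derivAlong, divHessianGrad, hessianGradGrad, Finset.sum_fn, mul_assoc] using h
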